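/- arXiv:2601.16966 — 2 statements merged into one kernel-verified Lean document; each statement's English description precedes it below -/
import Mathlib

section
/- Let n ≥ 7 be an integer and let k be an integer with 15n/16 ≤ k ≤ n-12. Let t_{n,k} ∈ (0,1) be the unique zero of f_{n,k} and set g̃(t) := ₂F₁(1, (n-4)/2; k/2; t²). Then g̃'(t_{n,k})/g̃(t_{n,k}) > ((n-2)·t_{n,k} - (k-1)·t_{n,k}⁻¹)/(1 - t_{n,k}²); that is, 4-n ∈ A_{n,k}. -/
/-!
Put `s = t²`, and let `f`, `g` be `f_{n,k}`, `g̃_{n,k}` as functions of `s`. The series of `g` gives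
the first-order equation `s(1-s)g' = ((n-4)s/2 - k/2 + 1)g + (k/2 - 1)`, which turns the claim into
`(k-2)/g(s₀) > 2s₀ - 1` at the zero `s₀` of `f`; this is trivial for `s₀ ≤ 1/2`.

With `X = (k-ns)/2`, the functions `u = (k/2-1)/g` and `v = -((n-1)/4) f/f'` satisfy Riccati
equations that differ only in lower-order terms:
`s(1-s)u' = (X - 1 + 2s)u - u²` and `s(1-s)v' = -((n-1)/4)s(1-s) + Xv - v²`.
Since `v(s₀) = 0`, it suffices that `u - v > s - 1/2` at `s₀`. All coefficients of `f'` and `f''`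
are negative, so `v ≥ X`. Using this, the barrier `2s - 1`, which has the right value `-1` at `0`,
gives `u - v ≥ 2s - 1` on `[0, 1/2]`. From `s = 1/2` on the barrier `s - 1/2` takes over: it cannot
be crossed as long as the concave quadratic `(2s-1)(k-1-(n-2)s) + (n-5)s(1-s)` is positive, that is,
up to `σ = (n+k)/(2n)` and a little beyond.

It remains to see that `s₀ ≤ σ`, and this is where `n - k ≥ 12` is needed. A parabola in `s` that
vanishes at `σ` is a supersolution of the Riccati equation of `v` (`barrier_ineq`), whence
`v(σ) ≤ 0`. The argument is carried out in `core`; `hcoef_ode` and `hcoef_one_ode` supply the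
differential equations.
-/

/-- The Gauss hypergeometric function `₂F₁(a,b;c;s)`, defined by its power series. -/
noncomputable def hyp2F1 (a b c s : ℝ) : ℝ :=
  ∑' m : ℕ, ((ascPochhammer ℝ m).eval a * (ascPochhammer ℝ m).eval b)
    / ((ascPochhammer ℝ m).eval c * (m.factorial : ℝ)) * s ^ m

/-- `f_{n,k}(t) := ₂F₁((n-1)/2, -1/2; k/2; t²)`. -/
noncomputable def fnk (n k : ℕ) (t : ℝ) : ℝ :=
  hyp2F1 (((n : ℝ) - 1) / 2) (-1 / 2) ((k : ℝ) / 2) (t ^ 2)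

/-- `g̃_{n,k}(t) := g_{n,k,4-n}(t) = ₂F₁(1, (n-4)/2; k/2; t²)`. -/
noncomputable def gtil (n k : ℕ) (t : ℝ) : ℝ :=
  hyp2F1 1 (((n : ℝ) - 4) / 2) ((k : ℝ) / 2) (t ^ 2)

/-! ### Power series on the unit disc and the hypergeometric equation -/

/-- The sum of the power series with coefficients `A`; it is used only inside the disc of
convergence. -/
noncomputable def psum (A : ℕ → ℝ) (s : ℝ) : ℝ := ∑' m : ℕ, A m * s ^ m

/-- The coefficients of the formal derivative of the power series with coefficients `A`. -/
def dcoef (A : ℕ → ℝ) (m : ℕ) : ℝ := (m + 1) * A (m + 1)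

/-- The power series with coefficients `A` converges absolutely on the open unit disc. -/
def UnitDisc (A : ℕ → ℝ) : Prop := ∀ r : ℝ, 0 ≤ r → r < 1 → Summable fun m => |A m| * r ^ m

lemma UnitDisc.summable_dcoef {A : ℕ → ℝ} (hA : UnitDisc A) : UnitDisc (dcoef A) := by
  intro r hr0 hr1
  obtain ⟨ρ, h1, h2⟩ := exists_between hr1
  have hρ : 0 < ρ := hr0.trans_lt h1
  obtain ⟨C, hC⟩ := (hA ρ hρ.le h2).tendsto_atTop_zero.bddAbove_range
  have hq : ‖r / ρ‖ < 1 := by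
    rw [Real.norm_of_nonneg (by positivity)]
    exact (div_lt_one hρ).mpr h1
  have hs : Summable fun m : ℕ => C / ρ * (((m : ℝ) ^ 1 * (r / ρ) ^ m) + (r / ρ) ^ m) :=
    ((summable_pow_mul_geometric_of_norm_lt_one 1 hq).add
      (summable_geometric_of_norm_lt_one hq)).mul_left _
  refine Summable.of_nonneg_of_le (fun m => by positivity) (fun m => ?_) hs
  have hb : |A (m + 1)| * ρ ^ (m + 1) ≤ C := hC ⟨m + 1, rfl⟩
  have : C / ρ * (((m : ℝ) ^ 1 * (r / ρ) ^ m) + (r / ρ) ^ m)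
      = (m + 1) * (C / ρ ^ (m + 1)) * r ^ m := by
    rw [div_pow, pow_succ]
    field_simp
    ring
  rw [this, dcoef, abs_mul, abs_of_nonneg (by positivity : (0 : ℝ) ≤ m + 1)]
  gcongr
  rwa [le_div_iff₀ (by positivity)]

lemma UnitDisc.hasSum {A : ℕ → ℝ} (hA : UnitDisc A) {s : ℝ} (hs : s ∈ Set.Ico (0 : ℝ) 1) :
    HasSum (fun m => A m * s ^ m) (psum A s) := by
  apply Summable.hasSum
  apply Summable.of_norm
  simpa [abs_mul, abs_of_nonneg hs.1] using hA s hs.1 hs.2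

/-- Euler's operator `s · d/ds` multiplies the `m`-th coefficient by `m`. -/
lemma UnitDisc.hasSum_mul {A : ℕ → ℝ} (hA : UnitDisc A) {s : ℝ} (hs : s ∈ Set.Ico (0 : ℝ) 1) :
    HasSum (fun m => m * A m * s ^ m) (s * psum (dcoef A) s) := by
  rw [← hasSum_nat_add_iff' 1]
  simp only [Finset.range_one, Finset.sum_singleton, Nat.cast_zero, zero_mul, sub_zero]
  refine ((hA.summable_dcoef.hasSum hs).mul_left s).congr_fun ?_ 
  intro m
  simp only [dcoef]
  push_cast
  ring

lemma UnitDisc.hasDerivAt {A : ℕ → ℝ} (hA : UnitDisc A) {s : ℝ} (hs : s ∈ Set.Ico (0 : ℝ) 1) :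
    HasDerivAt (psum A) (psum (dcoef A) s) s := by
  obtain ⟨r, h1, h2⟩ := exists_between hs.2
  have hr : 0 < r := hs.1.trans_lt h1
  have hsum : Summable fun m : ℕ => m * |A m| * r ^ (m - 1) := by
    rw [← summable_nat_add_iff 1]
    refine (hA.summable_dcoef r hr.le h2).congr fun m => ?_
    rw [dcoef, abs_mul, abs_of_nonneg (by positivity : (0 : ℝ) ≤ m + 1)]
    push_cast
    simp
  have hmem : s ∈ Set.Ioo (-r) r := ⟨by linarith [hs.1], h1⟩
  have h := hasDerivAt_tsum_of_isPreconnected (g := fun m x => A m * x ^ m)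
    (g' := fun m x => A m * (m * x ^ (m - 1))) hsum isOpen_Ioo
    (convex_Ioo (-r) r).isPreconnected
    (fun m y _ => (hasDerivAt_pow m y).const_mul (A m)) ?_ hmem (hA.hasSum hs).summable hmem
  · have hsm : Summable fun m : ℕ => A m * (m * s ^ (m - 1)) := by
      rw [← summable_nat_add_iff 1]
      refine (hA.summable_dcoef.hasSum hs).summable.congr fun m => ?_
      rw [dcoef]
      push_cast
      ring
    have e : ∑' m : ℕ, A m * (m * s ^ (m - 1)) = psum (dcoef A) s := by
      rw [hsm.tsum_eq_zero_add, psum]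
      rw [Nat.cast_zero, zero_mul, mul_zero, zero_add]
      refine tsum_congr fun m => ?_
      rw [dcoef]
      push_cast
      ring
    rw [← e]
    exact h
  · intro m y hy
    rw [norm_mul, norm_mul, norm_pow, Real.norm_natCast, Real.norm_eq_abs, Real.norm_eq_abs]
    have : |y| ≤ r := (abs_lt.mpr hy).le
    calc |A m| * (m * |y| ^ (m - 1)) ≤ |A m| * (m * r ^ (m - 1)) := by gcongr
      _ = m * |A m| * r ^ (m - 1) := by ring

lemma UnitDisc.psum_pos {A : ℕ → ℝ} (hA : UnitDisc A) (h : ∀ m, 0 < A m) {s : ℝ}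
    (hs : s ∈ Set.Ico (0 : ℝ) 1) : 0 < psum A s := by
  refine (hA.hasSum hs).summable.tsum_pos
    (fun m => mul_nonneg (h m).le (pow_nonneg hs.1 m)) 0 ?_
  simpa using h 0

lemma UnitDisc.psum_neg {A : ℕ → ℝ} (hA : UnitDisc A) (h : ∀ m, A m < 0) {s : ℝ}
    (hs : s ∈ Set.Ico (0 : ℝ) 1) : psum A s < 0 := by
  have hA' : UnitDisc (-A) := fun r h0 h1 => by simpa using hA r h0 h1
  have := hA'.psum_pos (fun m => neg_pos.mpr (h m)) hs
  simpa [psum, tsum_neg] using this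

/-- The `m`-th coefficient of `₂F₁(a,b;c;·)`. -/
noncomputable def hcoef (a b c : ℝ) (m : ℕ) : ℝ :=
  ((ascPochhammer ℝ m).eval a * (ascPochhammer ℝ m).eval b)
    / ((ascPochhammer ℝ m).eval c * (m.factorial : ℝ))

lemma hcoef_succ {a b c : ℝ} (hc : 0 < c) (m : ℕ) :
    hcoef a b c (m + 1) = (a + m) / (c + m) * ((b + m) / (1 + m)) * hcoef a b c m := by
  have h1 : (ascPochhammer ℝ m).eval c ≠ 0 := (ascPochhammer_pos m c hc).ne'
  have h2 : c + m ≠ 0 := by positivity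
  have h3 : (1 + m : ℝ) ≠ 0 := by positivity
  have h4 : (m.factorial : ℝ) ≠ 0 := by positivity
  simp only [hcoef, ascPochhammer_succ_eval, Nat.factorial_succ]
  push_cast
  have h5 : (m + 1 : ℝ) ≠ 0 := by positivity
  field_simp
  ring

lemma unitDisc_hcoef (a b : ℝ) {c : ℝ} (hc : 0 < c) : UnitDisc (hcoef a b c) := by
  intro r hr0 hr1
  obtain ⟨ρ, h1, h2⟩ := exists_between hr1
  have ht : Filter.Tendsto (fun m : ℕ => |(a + m) / (c + m) * ((b + m) / (1 + m))| * r)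
      Filter.atTop (nhds (|1 * 1| * r)) := by
    have key : ∀ x y : ℝ, Filter.Tendsto (fun m : ℕ => (x + m) / (y + m))
        Filter.atTop (nhds 1) := fun x y => by
      simpa using tendsto_add_mul_div_add_mul_atTop_nhds x y 1 (one_ne_zero (α := ℝ))
    exact (((key a c).mul (key b 1)).abs).mul_const r
  have hev := ht.eventually (gt_mem_nhds (show |1 * 1| * r < ρ by simpa using h1))
  apply summable_of_ratio_norm_eventually_le h2
  filter_upwards [hev] with m hm
  rw [hcoef_succ hc, Real.norm_of_nonneg (by positivity), Real.norm_of_nonneg (by positivity),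
    abs_mul, pow_succ]
  calc _ = (|(a + m) / (c + m) * ((b + m) / (1 + m))| * r) * (|hcoef a b c m| * r ^ m) := by ring
    _ ≤ _ := by gcongr

/-- The hypergeometric differential equation, read off from the coefficient recurrence. -/
lemma hcoef_ode {a b c : ℝ} (hc : 0 < c) {s : ℝ} (hs : s ∈ Set.Ico (0 : ℝ) 1) :
    s * (1 - s) * psum (dcoef (dcoef (hcoef a b c))) s
      + (c - (a + b + 1) * s) * psum (dcoef (hcoef a b c)) s
      - a * b * psum (hcoef a b c) s = 0 := by
  have hA := unitDisc_hcoef a b hc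
  have hθ := hA.hasSum_mul hs
  have h2 := (hA.summable_dcoef.hasSum_mul hs).mul_left s
  have h2' : HasSum (fun m : ℕ => m * (m - 1) * hcoef a b c m * s ^ m)
      (s * (s * psum (dcoef (dcoef (hcoef a b c))) s)) := by
    rw [← hasSum_nat_add_iff' 1]
    simp only [Finset.range_one, Finset.sum_singleton, Nat.cast_zero, zero_mul, sub_zero]
    refine h2.congr_fun ?_
    intro m
    simp only [dcoef]
    push_cast
    ring
  have hL := (hA.summable_dcoef.hasSum_mul hs).add ((hA.summable_dcoef.hasSum hs).mul_left c)
  have hR := (h2'.add (hθ.mul_left (a + b + 1))).add ((hA.hasSum hs).mul_left (a * b))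
  have : _ = _ := hL.unique (hR.congr_fun ?_)
  · linear_combination this
  · intro m
    have h2 : c + m ≠ 0 := by positivity
    have h3 : (1 + m : ℝ) ≠ 0 := by positivity
    simp only [dcoef, hcoef_succ hc]
    field_simp
    ring

/-- For `a = 1` the factors `(1)_m` and `m!` cancel, so the coefficient recurrence has order one in
`m` and `₂F₁(1,b;c;·)` solves a first-order equation. -/
lemma hcoef_one_ode {b c : ℝ} (hc : 0 < c) {s : ℝ} (hs : s ∈ Set.Ico (0 : ℝ) 1) :
    s * (1 - s) * psum (dcoef (hcoef 1 b c)) s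
      = (b * s - c + 1) * psum (hcoef 1 b c) s + (c - 1) := by
  have hA := unitDisc_hcoef 1 b hc
  have h1 := hA.hasSum_mul hs
  have h0 := hA.hasSum hs
  have hL := h1.add (h0.mul_left (c - 1))
  rw [← hasSum_nat_add_iff' 1] at hL
  have hR := (h1.add (h0.mul_left b)).mul_left s
  have h00 : hcoef 1 b c 0 = 1 := by simp [hcoef]
  have : _ = _ := hL.unique (hR.congr_fun ?_)
  · simp [h00] at this
    linear_combination this
  · intro m
    have h2 : c + m ≠ 0 := by positivity
    have h3 : (1 + m : ℝ) ≠ 0 := by positivity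
    simp only [hcoef_succ hc]
    push_cast
    field_simp
    ring

lemma hcoef_neg_half_neg {a c : ℝ} (ha : 0 < a) (hc : 0 < c) (m : ℕ) :
    hcoef a (-1 / 2) c (m + 1) < 0 := by
  induction m with
  | zero =>
    rw [hcoef_succ hc]
    have : 0 < a / c := by positivity
    simp [hcoef]
    linarith
  | succ m ih =>
    rw [hcoef_succ hc]
    refine mul_neg_of_pos_of_neg (mul_pos (by positivity) (div_pos ?_ (by positivity))) ih
    push_cast
    linarith [(Nat.cast_nonneg m : (0 : ℝ) ≤ m)]

lemma hcoef_pos {a b c : ℝ} (ha : 0 < a) (hb : 0 < b) (hc : 0 < c) (m : ℕ) :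
    0 < hcoef a b c m :=
  div_pos (mul_pos (ascPochhammer_pos m a ha) (ascPochhammer_pos m b hb))
    (mul_pos (ascPochhammer_pos m c hc) (by positivity))

/-! ### Barriers for the Riccati equations -/

/-- A function that can only vanish with positive slope stays positive. -/
lemma fence_pos {y y' : ℝ → ℝ} {a b : ℝ} (hab : a < b)
    (hy : ∀ s ∈ Set.Icc a b, HasDerivAt y (y' s) s) (ha : 0 ≤ y a)
    (h : ∀ s ∈ Set.Icc a b, y s = 0 → 0 < y' s) : 0 < y b := by
  have h0 : ∀ ⦃x⦄, x ∈ Set.Icc a b → -y x ≤ (fun _ => (0 : ℝ)) x := by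
    apply image_le_of_deriv_right_lt_deriv_boundary (f := fun s => -y s) (f' := fun s => -y' s)
      (B := fun _ => 0) (B' := fun _ => 0)
    · exact fun s hs => (hy s hs).neg.continuousAt.continuousWithinAt
    · exact fun s hs => (hy s ⟨hs.1, hs.2.le⟩).neg.hasDerivWithinAt
    · simpa using ha
    · exact fun x => hasDerivAt_const x 0
    · intro s hs e
      have := h s ⟨hs.1, hs.2.le⟩ (by simpa using e)
      linarith
  have hb : b ∈ Set.Icc a b := ⟨hab.le, le_rfl⟩
  have hyb := h0 hb
  rcases (by simpa using hyb : 0 ≤ y b).eq_or_lt with e | e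
  · exfalso
    have hd := h b hb e.symm
    have ht := (hasDerivAt_iff_tendsto_slope_left_right.mp (hy b hb)).1
    have hev := ht.eventually (lt_mem_nhds hd)
    have hev2 : ∀ᶠ x in nhdsWithin b (Set.Iio b), x ∈ Set.Ioo a b := Ioo_mem_nhdsLT hab
    obtain ⟨x, hx, hx2⟩ := (hev.and hev2).exists
    rw [slope_def_field, ← e] at hx
    have h1 := h0 (⟨hx2.1.le, hx2.2.le⟩ : x ∈ Set.Icc a b)
    have h2 : (y x - 0) / (x - b) ≤ 0 :=
      div_nonpos_of_nonneg_of_nonpos (by simpa using h1) (by linarith [hx2.2])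
    linarith
  · exact e

/-- A function that is nondecreasing wherever it is negative stays nonnegative. The sign of the
derivative at the left endpoint is irrelevant; there the Riccati equations below degenerate. -/
lemma fence_nonneg {y y' : ℝ → ℝ} {a b : ℝ} (hab : a ≤ b)
    (hy : ∀ s ∈ Set.Icc a b, HasDerivAt y (y' s) s) (ha : 0 ≤ y a)
    (h : ∀ s ∈ Set.Ioo a b, y s < 0 → 0 ≤ y' s) : 0 ≤ y b := by
  by_contra! hb
  have hc : ContinuousOn y (Set.Icc a b) :=
    fun s hs => (hy s hs).continuousAt.continuousWithinAt
  -- `p` is the last point at which `y` is nonnegative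
  obtain ⟨p, ⟨hp, hp0⟩, hmax⟩ :
      ∃ p, IsGreatest (Set.Icc a b ∩ y ⁻¹' Set.Ici 0) p :=
    (isCompact_Icc.of_isClosed_subset (hc.preimage_isClosed_of_isClosed isClosed_Icc isClosed_Ici)
      Set.inter_subset_left).exists_isGreatest ⟨a, ⟨le_rfl, hab⟩, ha⟩
  have hneg : ∀ s ∈ Set.Ioo p b, y s < 0 := by
    intro s hs
    by_contra! h0
    exact absurd (hmax ⟨⟨hp.1.trans hs.1.le, hs.2.le⟩, h0⟩) (not_le.mpr hs.1)
  have hm : MonotoneOn y (Set.Icc p b) := by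
    apply monotoneOn_of_hasDerivWithinAt_nonneg (f' := y') (convex_Icc p b)
      (hc.mono (Set.Icc_subset_Icc_left hp.1))
    · intro s hs
      rw [interior_Icc] at hs
      exact (hy s ⟨hp.1.trans hs.1.le, hs.2.le⟩).hasDerivWithinAt
    · intro s hs
      rw [interior_Icc] at hs
      exact h s ⟨hp.1.trans_lt hs.1, hs.2⟩ (hneg s hs)
  have := hm ⟨le_rfl, hp.2⟩ ⟨hp.2, le_rfl⟩ hp.2
  have h0 : 0 ≤ y p := hp0
  linarith

/-- The parabola `V = 31z/125 + z²/17`, in the variable `z = (n+k)/2 - ns`, is a strict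
supersolution of the Riccati equation
`s(1-s)v' = -((n-1)/4)s(1-s) + ((k-ns)/2)v - v²` on `0 < z`. The slope `31/125` is slightly below
`(n-1)/(4n)`; the constant `1/17` is what makes the cubic `key` positive when `n - k = 12`. -/
lemma barrier_ineq {n k s z : ℝ} (hn : 192 ≤ n) (hkn : k + 12 ≤ n)
    (hs0 : 0 < s) (hs1 : s < 1) (hz : z = (n + k) / 2 - n * s) (hz0 : 0 < z) :
    s * (1 - s) * (n * (31 / 125 + 2 / 17 * z)) <
      (n - 1) / 4 * (s * (1 - s)) - (k - n * s) / 2 * (31 / 125 * z + z ^ 2 / 17)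
        + (31 / 125 * z + z ^ 2 / 17) ^ 2 := by
  obtain ⟨h, hh⟩ : ∃ h, h = (n - k) / 2 := ⟨_, rfl⟩
  have hh6 : 6 ≤ h := by linarith
  have e1 : n * (1 - s) = h + z := by rw [hh, hz]; ring
  have e2 : k - n * s = z - h := by rw [hh, hz]; ring
  have key : 2 / 17 * (h + z) <
      (31 / 125 + z / 17) * (h / 2 - 63 / 250 * z + z ^ 2 / 17) := by
    -- `h = 6` is the worst case
    have : 2 / 17 * (6 + z) < (31 / 125 + z / 17) * (6 / 2 - 63 / 250 * z + z ^ 2 / 17) := by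
      nlinarith [mul_nonneg hz0.le (sq_nonneg (z - 3 / 5)), sq_nonneg (z - 3 / 5), sq_nonneg z]
    nlinarith [mul_nonneg hz0.le (sub_nonneg.mpr hh6)]
  have h1 : s * (h + z) ≤ h + z := by nlinarith
  have h2 : s * (1 - s) * (n * (31 / 125)) ≤ (n - 1) / 4 * (s * (1 - s)) := by
    nlinarith [mul_pos hs0 (sub_pos.mpr hs1)]
  have h3 : s * (1 - s) * (n * (2 / 17 * z)) = 2 / 17 * z * (s * (h + z)) := by
    rw [← e1]; ring
  have h4 := mul_lt_mul_of_pos_left key hz0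
  have h5 : 2 / 17 * z * (s * (h + z)) ≤ 2 / 17 * z * (h + z) :=
    mul_le_mul_of_nonneg_left h1 (by positivity)
  rw [e2]
  nlinarith

/-- The theorem in the variable `s = t²`, for any solutions `f`, `g` of the two differential
equations with the right signs (`P` stands for `-f'`). The initial values `v(0) = k/2` and
`u(0) = k/2 - 1` need no hypothesis: they are forced by the equations at the singular point `0`. -/
lemma core {n k : ℝ} (hn : 192 ≤ n) (hk : 15 * n / 16 ≤ k) (hkn : k + 12 ≤ n)
    {f P P' g g' : ℝ → ℝ}
    (hf : ∀ s ∈ Set.Ico (0 : ℝ) 1, HasDerivAt f (-P s) s)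
    (hP : ∀ s ∈ Set.Ico (0 : ℝ) 1, HasDerivAt P (P' s) s)
    (hg : ∀ s ∈ Set.Ico (0 : ℝ) 1, HasDerivAt g (g' s) s)
    (hP0 : ∀ s ∈ Set.Ico (0 : ℝ) 1, 0 < P s)
    (hP1 : ∀ s ∈ Set.Ico (0 : ℝ) 1, 0 ≤ P' s)
    (hg0 : ∀ s ∈ Set.Ico (0 : ℝ) 1, 0 < g s)
    (hfode : ∀ s ∈ Set.Ico (0 : ℝ) 1,
      s * (1 - s) * P' s = (n - 1) / 4 * f s - (k - n * s) / 2 * P s)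
    (hgode : ∀ s ∈ Set.Ico (0 : ℝ) 1,
      s * (1 - s) * g' s = ((n - 4) / 2 * s - k / 2 + 1) * g s + (k / 2 - 1))
    {s₀ : ℝ} (hs₀ : s₀ ∈ Set.Ioo (0 : ℝ) 1) (hz : f s₀ = 0) :
    2 * s₀ - 1 < (k - 2) / g s₀ := by
  have hk2 : 0 < k - 2 := by linarith
  have hs₀' : s₀ ∈ Set.Ico (0 : ℝ) 1 := ⟨hs₀.1.le, hs₀.2⟩
  rcases le_or_gt s₀ (1 / 2) with hhalf | hhalf
  · have := div_pos hk2 (hg0 s₀ hs₀')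
    linarith
  have h00 : (0 : ℝ) ∈ Set.Ico (0 : ℝ) 1 := by simp
  set v : ℝ → ℝ := fun s => (n - 1) / 4 * f s / P s with hv
  set u : ℝ → ℝ := fun s => (k / 2 - 1) / g s with hu
  obtain ⟨v', hv'⟩ : ∃ v' : ℝ → ℝ, ∀ s ∈ Set.Ico (0 : ℝ) 1, HasDerivAt v (v' s) s ∧
      s * (1 - s) * v' s =
        -((n - 1) / 4) * (s * (1 - s)) + (k - n * s) / 2 * v s - v s ^ 2 := by
    refine ⟨fun s => ((n - 1) / 4 * (-P s) * P s - (n - 1) / 4 * f s * P' s) / P s ^ 2,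
      fun s hs => ⟨((hf s hs).const_mul _).div (hP s hs) (hP0 s hs).ne', ?_⟩⟩
    have := (hP0 s hs).ne'
    have e := hfode s hs
    simp only [hv]
    field_simp
    linear_combination (-(n - 1) * f s * 8) * e
  obtain ⟨u', hu'⟩ : ∃ u' : ℝ → ℝ, ∀ s ∈ Set.Ico (0 : ℝ) 1, HasDerivAt u (u' s) s ∧
      s * (1 - s) * u' s = ((k - n * s) / 2 - 1 + 2 * s) * u s - u s ^ 2 := by
    refine ⟨fun s => (0 * g s - (k / 2 - 1) * g' s) / g s ^ 2,
      fun s hs => ⟨(hasDerivAt_const s _).div (hg s hs) (hg0 s hs).ne', ?_⟩⟩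
    have := (hg0 s hs).ne'
    have e := hgode s hs
    simp only [hu]
    field_simp
    linear_combination (-(k - 2) * 2) * e
  have hvX : ∀ s ∈ Set.Ico (0 : ℝ) 1, (k - n * s) / 2 ≤ v s := by
    intro s hs
    rw [hv, le_div_iff₀ (hP0 s hs)]
    have := mul_nonneg (mul_nonneg hs.1 (sub_nonneg.mpr hs.2.le)) (hP1 s hs)
    linarith [hfode s hs]
  have hu0 : ∀ s ∈ Set.Ico (0 : ℝ) 1, 0 < u s := fun s hs =>
    div_pos (by linarith) (hg0 s hs)
  have hv00 : v 0 = k / 2 := by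
    have := hfode 0 h00
    rw [hv, div_eq_iff (hP0 0 h00).ne']
    linarith
  have hu00 : u 0 = k / 2 - 1 := by
    have := hgode 0 h00
    rw [hu, div_eq_iff (hg0 0 h00).ne']
    linarith
  have hsub : ∀ s ∈ Set.Icc (0 : ℝ) (1 / 2), s ∈ Set.Ico (0 : ℝ) 1 :=
    fun s hs => ⟨hs.1, by linarith [hs.2]⟩
  -- on `[0, 1/2]`, `u - v ≥ 2s - 1`, with equality at `0`
  have hstep1 : 0 ≤ u (1 / 2) - v (1 / 2) - (2 * (1 / 2) - 1) := by
    apply fence_nonneg (y := fun s => u s - v s - (2 * s - 1))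
      (y' := fun s => u' s - v' s - 2 * 1) (a := 0) (by norm_num)
    · intro s hs
      exact ((hu' s (hsub s hs)).1.sub (hv' s (hsub s hs)).1).sub
        (((hasDerivAt_id s).const_mul 2).sub_const 1)
    · simp only [hv00, hu00]; linarith
    · intro s hs hy
      have hs' := hsub s ⟨hs.1.le, hs.2.le⟩
      have hp : 0 < s * (1 - s) := mul_pos hs.1 (by linarith [hs.2])
      have e1 := (hu' s hs').2
      have e2 := (hv' s hs').2
      have h1 := hvX s hs'
      have h2 := hu0 s hs'
      refine le_of_mul_le_mul_left ?_ hp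
      have e : s * (1 - s) * (u' s - v' s - 2 * 1) =
          (v s - (k - n * s) / 2 + u s) * -(u s - v s - (2 * s - 1))
          + (1 - 2 * s) * (v s - (k - n * s) / 2) + ((n - 1) / 4 - 2) * (s * (1 - s)) := by
        linear_combination e1 - e2
      rw [e, mul_zero]
      have a1 := mul_nonneg (show 0 ≤ v s - (k - n * s) / 2 + u s by linarith)
        (show 0 ≤ -(u s - v s - (2 * s - 1)) by linarith)
      have a2 := mul_nonneg (show 0 ≤ 1 - 2 * s by linarith [hs.2])
        (show 0 ≤ v s - (k - n * s) / 2 by linarith)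
      have a3 := mul_nonneg (show 0 ≤ (n - 1) / 4 - 2 by linarith) hp.le
      linarith
  have hn0 : 0 < n := by linarith
  -- `σ` is the zero of the parabolic barrier; it satisfies `n(1 - σ) = (n - k)/2`
  set σ : ℝ := (n + k) / (2 * n) with hσ
  have hnσ : n * σ = (n + k) / 2 := by rw [hσ]; field_simp
  have hσ1 : σ < 1 := by rw [hσ, div_lt_one (by linarith)]; linarith
  have hσ2 : 31 / 32 ≤ σ := by rw [hσ, le_div_iff₀ (by linarith)]; linarith
  -- if `σ < s₀`, the barrier gives `v σ ≤ 0`, hence `f σ ≤ 0`, although `f` decreases to `f s₀ = 0`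
  have hs₀σ : s₀ ≤ σ := by
    by_contra! hlt
    have hσI : σ ∈ Set.Ico (0 : ℝ) 1 := ⟨by linarith, hσ1⟩
    have hsubσ : ∀ s ∈ Set.Icc (0 : ℝ) σ, s ∈ Set.Ico (0 : ℝ) 1 :=
      fun s hs => ⟨hs.1, by linarith [hs.2]⟩
    have hb : ∀ ⦃x⦄, x ∈ Set.Icc (0 : ℝ) σ →
        v x ≤ (fun s => 31 / 125 * ((n + k) / 2 - n * s) + ((n + k) / 2 - n * s) ^ 2 / 17) x := by
      refine image_le_of_deriv_right_lt_deriv_boundary (f := v) (f' := v')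
        (B := fun s => 31 / 125 * ((n + k) / 2 - n * s) + ((n + k) / 2 - n * s) ^ 2 / 17)
        (B' := fun s => -(n * (31 / 125 + 2 / 17 * ((n + k) / 2 - n * s)))) ?_ ?_ ?_ ?_ ?_
      · exact fun s hs => (hv' s (hsubσ s hs)).1.continuousAt.continuousWithinAt
      · exact fun s hs => (hv' s (hsubσ s ⟨hs.1, hs.2.le⟩)).1.hasDerivWithinAt
      · rw [hv00]; nlinarith
      · intro s
        have h : HasDerivAt (fun x => (n + k) / 2 - n * x) (-(n * 1)) s :=
          ((hasDerivAt_id s).const_mul n).const_sub ((n + k) / 2)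
        refine ((h.const_mul (31 / 125)).add ((h.pow 2).div_const 17)).congr_deriv ?_
        ring
      · intro s hs e
        have hs' := hsubσ s ⟨hs.1, hs.2.le⟩
        rcases hs.1.eq_or_lt with rfl | hpos
        · rw [hv00] at e
          nlinarith
        · have hp : 0 < s * (1 - s) := mul_pos hpos (by linarith [hs'.2])
          have hz0 : 0 < (n + k) / 2 - n * s := by
            rw [← hnσ]; nlinarith [hs.2]
          have hB := barrier_ineq hn hkn hpos hs'.2 rfl hz0
          have e2 := (hv' s hs').2
          rw [e] at e2
          refine lt_of_mul_lt_mul_left ?_ hp.le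
          rw [e2]
          linarith
    have hvσ := hb (⟨by linarith, le_rfl⟩ : σ ∈ Set.Icc (0 : ℝ) σ)
    simp only [hnσ] at hvσ
    have hfσ : f σ ≤ 0 := by
      by_contra! h
      have : 0 < v σ := div_pos (mul_pos (by linarith) h) (hP0 σ hσI)
      norm_num at hvσ
      linarith
    have hanti : StrictAntiOn f (Set.Ico 0 1) := by
      apply strictAntiOn_of_hasDerivWithinAt_neg (f' := fun s => -P s) (convex_Ico 0 1)
      · exact fun s hs => (hf s hs).continuousAt.continuousWithinAt
      · exact fun s hs => (hf s (interior_subset hs)).hasDerivWithinAt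
      · exact fun s hs => neg_neg_of_pos (hP0 s (interior_subset hs))
    linarith [hanti hσI hs₀' hlt]
  -- on `[1/2, s₀]`, the lower barrier for `u - v` is `s - 1/2`, for which `v` drops out
  have hstep2 : 0 < u s₀ - v s₀ - (s₀ - 1 / 2) := by
    have hsub2 : ∀ s ∈ Set.Icc (1 / 2) s₀, s ∈ Set.Ico (0 : ℝ) 1 :=
      fun s hs => ⟨by linarith [hs.1], by linarith [hs.2, hs₀.2]⟩
    apply fence_pos (y := fun s => u s - v s - (s - 1 / 2))
      (y' := fun s => u' s - v' s - 1) (a := 1 / 2) hhalf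
    · intro s hs
      exact ((hu' s (hsub2 s hs)).1.sub (hv' s (hsub2 s hs)).1).sub
        ((hasDerivAt_id s).sub_const (1 / 2))
    · linarith
    · intro s hs hy
      have hs' := hsub2 s hs
      have hp : 0 < s * (1 - s) := mul_pos (by linarith [hs.1]) (by linarith [hs'.2])
      have e1 := (hu' s hs').2
      have e2 := (hv' s hs').2
      have eu : u s = v s + (s - 1 / 2) := by linarith
      rw [eu] at e1
      refine pos_of_mul_pos_right ?_ hp.le
      have e : s * (1 - s) * (u' s - v' s - 1) =
          ((2 * s - 1) * (k - 1 - (n - 2) * s) + (n - 5) * (s * (1 - s))) / 4 := by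
        linear_combination e1 - e2
      rw [e]
      have hQσ : 0 < (2 * σ - 1) * (k - 1 - (n - 2) * σ) + (n - 5) * (σ * (1 - σ)) := by
        have ek : k = 2 * (n * σ) - n := by rw [hnσ]; ring
        rw [ek]
        -- with `η = 1 - σ ≤ 1/32` the quantity is `1 - 9η + 9η² + nη²`
        nlinarith [mul_nonneg hn0.le (sq_nonneg (1 - σ)), sq_nonneg (1 - σ)]
      -- the same quadratic is concave and is positive at `1/2` and at `σ`, hence in between
      have hQ : 0 < (σ - 1 / 2) *
          ((2 * s - 1) * (k - 1 - (n - 2) * s) + (n - 5) * (s * (1 - s))) := by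
        have i : (σ - 1 / 2) *
            ((2 * s - 1) * (k - 1 - (n - 2) * s) + (n - 5) * (s * (1 - s))) =
            (n - 5) / 4 * (σ - s) + ((2 * σ - 1) * (k - 1 - (n - 2) * σ)
              + (n - 5) * (σ * (1 - σ))) * (s - 1 / 2)
            + (3 * n - 9) * ((s - 1 / 2) * (σ - s) * (σ - 1 / 2)) := by ring
        rw [i]
        have b1 : 0 ≤ σ - s := by linarith [hs.2]
        have b2 : 0 ≤ s - 1 / 2 := by linarith [hs.1]
        have b3 : 0 < σ - 1 / 2 := by linarith
        have c3 := mul_nonneg (show 0 ≤ 3 * n - 9 by linarith)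
          (mul_nonneg (mul_nonneg b2 b1) b3.le)
        have c1 := mul_nonneg (show 0 ≤ (n - 5) / 4 by linarith) b1
        have c2 := mul_nonneg hQσ.le b2
        rcases b2.eq_or_lt with e0 | e0
        · have : 0 < (n - 5) / 4 * (σ - s) := mul_pos (by linarith) (by linarith)
          linarith
        · have := mul_pos hQσ e0
          linarith
      have := pos_of_mul_pos_right hQ (by linarith)
      linarith
  have hvs₀ : v s₀ = 0 := by simp [hv, hz]
  rw [hvs₀] at hstep2
  have : (k - 2) / g s₀ = 2 * u s₀ := by rw [hu]; ring
  linarith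

/-- For `n ≥ 7` and `15n/16 ≤ k ≤ n-12`, the exponent `4-n` is
admissible: with `t₀` the unique zero of `f_{n,k}` in `(0,1)` and
`g̃(t) = ₂F₁(1,(n-4)/2;k/2;t²)`, one has
`g̃'(t₀)/g̃(t₀) > ((n-2)t₀ - (k-1)t₀⁻¹)/(1-t₀²)`. -/
theorem four_sub_n_admissible_large_k
    (n k : ℕ) (hn : 7 ≤ n) (hk1 : 15 * (n : ℝ) / 16 ≤ (k : ℝ)) (hk2 : k + 12 ≤ n)
    (t₀ : ℝ) (ht₀ : t₀ ∈ Set.Ioo (0 : ℝ) 1) (hzero : fnk n k t₀ = 0)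
    (huniq : ∀ t ∈ Set.Ioo (0 : ℝ) 1, fnk n k t = 0 → t = t₀) :
    deriv (gtil n k) t₀ / gtil n k t₀
      > (((n : ℝ) - 2) * t₀ - ((k : ℝ) - 1) * t₀⁻¹) / (1 - t₀ ^ 2) := by
  have hkn : (k : ℝ) + 12 ≤ n := by exact_mod_cast hk2
  have hn192 : (192 : ℝ) ≤ n := by linarith
  have hc : (0 : ℝ) < (k : ℝ) / 2 := by linarith
  have ha : (0 : ℝ) < ((n : ℝ) - 1) / 2 := by linarith
  have hb : (0 : ℝ) < ((n : ℝ) - 4) / 2 := by linarith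
  set A := hcoef (((n : ℝ) - 1) / 2) (-1 / 2) ((k : ℝ) / 2) with hAdef
  set G := hcoef 1 (((n : ℝ) - 4) / 2) ((k : ℝ) / 2) with hGdef
  have hA : UnitDisc A := unitDisc_hcoef _ _ hc
  have hG : UnitDisc G := unitDisc_hcoef _ _ hc
  have hgt : gtil n k = fun t => psum G (t ^ 2) := rfl
  have hdneg : ∀ m, dcoef A m < 0 := fun m =>
    mul_neg_of_pos_of_neg (by positivity) (hcoef_neg_half_neg ha hc m)
  have hddneg : ∀ m, dcoef (dcoef A) m < 0 := fun m =>
    mul_neg_of_pos_of_neg (by positivity) (hdneg _)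
  have hs₀ : t₀ ^ 2 ∈ Set.Ioo (0 : ℝ) 1 :=
    ⟨pow_pos ht₀.1 2, pow_lt_one₀ ht₀.1.le ht₀.2 two_ne_zero⟩
  have hs₀' : t₀ ^ 2 ∈ Set.Ico (0 : ℝ) 1 := ⟨hs₀.1.le, hs₀.2⟩
  have hgpos : 0 < psum G (t₀ ^ 2) := hG.psum_pos (hcoef_pos one_pos hb hc) hs₀'
  have key : 2 * t₀ ^ 2 - 1 < ((k : ℝ) - 2) / psum G (t₀ ^ 2) := by
    refine core hn192 hk1 hkn (f := psum A) (P := fun s => -psum (dcoef A) s)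
      (P' := fun s => -psum (dcoef (dcoef A)) s) (g := psum G) (g' := psum (dcoef G))
      (fun s hs => ?_) (fun s hs => (hA.summable_dcoef.hasDerivAt hs).neg)
      (fun s hs => hG.hasDerivAt hs) (fun s hs => ?_) (fun s hs => ?_)
      (fun s hs => hG.psum_pos (hcoef_pos one_pos hb hc) hs)
      (fun s hs => ?_) (fun s hs => ?_) hs₀ hzero
    · simpa using hA.hasDerivAt hs
    · exact neg_pos.mpr (hA.summable_dcoef.psum_neg hdneg hs)
    · exact (neg_pos.mpr (hA.summable_dcoef.summable_dcoef.psum_neg hddneg hs)).le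
    · have := hcoef_ode (a := ((n : ℝ) - 1) / 2) (b := -1 / 2) hc hs
      rw [← hAdef] at this
      linear_combination -this
    · exact hcoef_one_ode hc hs
  have hode : t₀ ^ 2 * (1 - t₀ ^ 2) * psum (dcoef G) (t₀ ^ 2) = _ := hcoef_one_ode hc hs₀'
  rw [← hGdef] at hode
  have hder : HasDerivAt (gtil n k) (psum (dcoef G) (t₀ ^ 2) * (2 * t₀)) t₀ := by
    rw [hgt]
    have h2 : HasDerivAt (fun t : ℝ => t ^ 2) (2 * t₀) t₀ := by
      simpa using hasDerivAt_pow 2 t₀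
    exact HasDerivAt.comp (h₂ := psum G) (h := fun t : ℝ => t ^ 2) t₀ (hG.hasDerivAt hs₀') h2
  have ht0 : 0 < t₀ := ht₀.1
  have h1t : 0 < 1 - t₀ ^ 2 := by linarith [hs₀.2]
  rw [hder.deriv, hgt, gt_iff_lt, ← sub_pos]
  have e : psum (dcoef G) (t₀ ^ 2) * (2 * t₀) / psum G (t₀ ^ 2)
      - (((n : ℝ) - 2) * t₀ - ((k : ℝ) - 1) * t₀⁻¹) / (1 - t₀ ^ 2)
      = (((k : ℝ) - 2) / psum G (t₀ ^ 2) - (2 * t₀ ^ 2 - 1)) / (t₀ * (1 - t₀ ^ 2)) := by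
    field_simp
    linear_combination 2 * hode
  rw [e]
  exact div_pos (by linarith) (mul_pos ht0 h1t)
end

section
/- Let n ≥ 7 be an integer and let k be an integer with n-11 ≤ k ≤ n-4. Let t_{n,k} ∈ (0,1) be the unique zero of f_{n,k} and set g̃(t) := ₂F₁(1, (n-4)/2; k/2; t²). Then g̃'(t_{n,k})/g̃(t_{n,k}) > ((n-2)·t_{n,k} - (k-1)·t_{n,k}⁻¹)/(1 - t_{n,k}²); that is, 4-n ∈ A_{n,k}. -/
/-! ### The series `₂F₁(1, b; c; s)` -/

/-- The series `∑ (b)_m / (c)_m s^m`, that is, `₂F₁(1, b; c; s)`. -/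
noncomputable def gs (b c s : ℝ) : ℝ :=
  ∑' m : ℕ, (ascPochhammer ℝ m).eval b / (ascPochhammer ℝ m).eval c * s ^ m

lemma ascP_succ (m : ℕ) (x : ℝ) :
    (ascPochhammer ℝ (m + 1)).eval x = (ascPochhammer ℝ m).eval x * (x + m) :=
  ascPochhammer_succ_eval m x

lemma hyp2F1_one (b c s : ℝ) : hyp2F1 1 b c s = gs b c s := by
  unfold hyp2F1 gs
  refine tsum_congr fun m => ?_
  have hm : (m.factorial : ℝ) ≠ 0 := by positivity
  rw [ascPochhammer_eval_one, mul_comm (m.factorial : ℝ), mul_div_mul_right _ _ hm]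

lemma summable_of_ratio {u ρ : ℕ → ℝ} {l : ℝ} (hl : |l| < 1)
    (hu : ∀ m, u (m + 1) = ρ m * u m) (hρ : Filter.Tendsto ρ Filter.atTop (nhds l)) :
    Summable u := by
  obtain ⟨r, h1, h2⟩ := exists_between hl
  refine summable_of_ratio_norm_eventually_le h2 ?_
  filter_upwards [hρ.abs.eventually (gt_mem_nhds h1)] with m hm
  rw [hu, norm_mul, Real.norm_eq_abs]
  exact mul_le_mul_of_nonneg_right hm.le (norm_nonneg _)

lemma tendsto_ratio (x y : ℝ) :
    Filter.Tendsto (fun m : ℕ => (x + m) / (y + m)) Filter.atTop (nhds 1) := by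
  have h := tendsto_add_mul_div_add_mul_atTop_nhds x y (1 : ℝ) (d := 1) one_ne_zero
  simpa using h

section coeff
variable {b c s : ℝ}

lemma gcoef_succ (hc : 0 < c) (m : ℕ) :
    (c + m) * ((ascPochhammer ℝ (m + 1)).eval b / (ascPochhammer ℝ (m + 1)).eval c)
      = (b + m) * ((ascPochhammer ℝ m).eval b / (ascPochhammer ℝ m).eval c) := by
  have h1 : (ascPochhammer ℝ m).eval c ≠ 0 := (ascPochhammer_pos m c hc).ne'
  have h2 : c + m ≠ 0 := by positivity
  rw [ascP_succ, ascP_succ]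
  field_simp

lemma gterm_succ (hc : 0 < c) (m : ℕ) :
    (ascPochhammer ℝ (m + 1)).eval b / (ascPochhammer ℝ (m + 1)).eval c * s ^ (m + 1)
      = ((b + m) / (c + m) * s) *
        ((ascPochhammer ℝ m).eval b / (ascPochhammer ℝ m).eval c * s ^ m) := by
  have h2 : c + m ≠ 0 := by positivity
  have := gcoef_succ (b := b) hc m
  rw [pow_succ]
  field_simp at this ⊢
  linear_combination (s * s ^ m) * this

lemma summable_gs (hc : 0 < c) (hs : |s| < 1) :
    Summable fun m : ℕ =>
      (ascPochhammer ℝ m).eval b / (ascPochhammer ℝ m).eval c * s ^ m := by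
  refine summable_of_ratio (ρ := fun m : ℕ => (b + m) / (c + m) * s) hs
    (fun m => gterm_succ hc m) ?_
  simpa using (tendsto_ratio b c).mul_const s

lemma summable_gs_mul (hc : 0 < c) (hs : |s| < 1) :
    Summable fun m : ℕ =>
      (m : ℝ) * ((ascPochhammer ℝ m).eval b / (ascPochhammer ℝ m).eval c * s ^ m) := by
  have h : Summable fun m : ℕ =>
      ((m : ℝ) + 1) * ((ascPochhammer ℝ m).eval b / (ascPochhammer ℝ m).eval c * s ^ m) := by
    refine summable_of_ratio
      (ρ := fun m : ℕ => (2 + m : ℝ) / (1 + m) * ((b + m) / (c + m) * s)) hs (fun m => ?_) ?_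
    · rw [gterm_succ hc m]
      have : (1 : ℝ) + m ≠ 0 := by positivity
      push_cast
      field_simp
      ring
    · simpa using (tendsto_ratio 2 1).mul ((tendsto_ratio b c).mul_const s)
  refine (h.sub (summable_gs (b := b) hc hs)).congr fun m => ?_
  ring

/-- The sum `∑ m (b)_m / (c)_m s^m = s ∂ₛ ₂F₁(1, b; c; s)`. -/
noncomputable def gsE (b c s : ℝ) : ℝ :=
  ∑' m : ℕ, (m : ℝ) * ((ascPochhammer ℝ m).eval b / (ascPochhammer ℝ m).eval c * s ^ m)

/-- First-order equation of `₂F₁(1, b; c; ·)`, from the two-term recurrence of its coefficients. -/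
lemma gsE_eq (hc : 0 < c) (hs : |s| < 1) :
    (1 - s) * gsE b c s = (b * s - (c - 1)) * gs b c s + (c - 1) := by
  have h0 := summable_gs (b := b) hc hs
  have h1 := summable_gs_mul (b := b) hc hs
  have hL : (gsE b c s + (c - 1) * gs b c s)
      = ∑' m : ℕ, ((m : ℝ) + (c - 1)) *
        ((ascPochhammer ℝ m).eval b / (ascPochhammer ℝ m).eval c * s ^ m) := by
    unfold gsE gs
    rw [← tsum_mul_left, ← h1.tsum_add (h0.mul_left _)]
    exact tsum_congr fun m => by ring
  have hR : s * (b * gs b c s + gsE b c s)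
      = ∑' m : ℕ, (s * ((b + m) *
        ((ascPochhammer ℝ m).eval b / (ascPochhammer ℝ m).eval c * s ^ m))) := by
    unfold gsE gs
    rw [← tsum_mul_left, ← (h0.mul_left _).tsum_add h1, ← tsum_mul_left]
    exact tsum_congr fun m => by ring
  have hsum : Summable fun m : ℕ => ((m : ℝ) + (c - 1)) *
        ((ascPochhammer ℝ m).eval b / (ascPochhammer ℝ m).eval c * s ^ m) :=
    (h1.add (h0.mul_left (c - 1))).congr fun m => by ring
  rw [hsum.tsum_eq_zero_add] at hL
  have hshift : ∀ m : ℕ, (((m + 1 : ℕ) : ℝ) + (c - 1)) *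
        ((ascPochhammer ℝ (m + 1)).eval b / (ascPochhammer ℝ (m + 1)).eval c * s ^ (m + 1))
      = s * ((b + m) *
        ((ascPochhammer ℝ m).eval b / (ascPochhammer ℝ m).eval c * s ^ m)) := by
    intro m
    have := gcoef_succ (b := b) hc m
    push_cast
    rw [pow_succ]
    linear_combination (s ^ m * s) * this
  rw [tsum_congr hshift, ← hR] at hL
  simp at hL
  linear_combination hL

/-- Contiguous relation raising the parameter `b`. -/
lemma gs_contig (hc : 0 < c) (hs : |s| < 1) :
    b * (1 - s) * gs (b + 1) c s = (b - c + 1) * gs b c s + (c - 1) := by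
  have h : b * gs (b + 1) c s = b * gs b c s + gsE b c s := by
    unfold gsE gs
    rw [← tsum_mul_left, ← tsum_mul_left,
      ← ((summable_gs hc hs).mul_left b).tsum_add (summable_gs_mul hc hs)]
    refine tsum_congr fun m => ?_
    have key : ∀ m : ℕ, b * (ascPochhammer ℝ m).eval (b + 1)
        = (b + m) * (ascPochhammer ℝ m).eval b := by
      intro m
      induction m with
      | zero => simp
      | succ m ih =>
        rw [ascP_succ, ascP_succ]
        push_cast
        linear_combination (b + 1 + m) * ih
    have := key m
    rw [← mul_assoc, ← mul_div_assoc, this]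
    ring
  linear_combination (1 - s) * h + gsE_eq (b := b) hc hs

lemma gterm_nonneg (hb : 0 ≤ b) (hc : 0 < c) (hs : 0 ≤ s) (m : ℕ) :
    0 ≤ (ascPochhammer ℝ m).eval b / (ascPochhammer ℝ m).eval c * s ^ m := by
  have h1 := ascPochhammer_pos m c hc
  have h2 : 0 ≤ (ascPochhammer ℝ m).eval b := by
    rcases hb.eq_or_lt with rfl | hb
    · cases m <;> simp
    · exact (ascPochhammer_pos m b hb).le
  positivity

lemma one_le_gs (hb : 0 ≤ b) (hc : 0 < c) (hs0 : 0 ≤ s) (hs : s < 1) : 1 ≤ gs b c s := by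
  have h := (summable_gs (b := b) hc (abs_lt.2 ⟨by linarith, hs⟩)).le_tsum 0
    (fun m _ => gterm_nonneg hb hc hs0 m)
  simpa [gs] using h

lemma ascP_mono (hb : 0 ≤ b) (hbc : b ≤ c) (m : ℕ) :
    0 ≤ (ascPochhammer ℝ m).eval b ∧
      (ascPochhammer ℝ m).eval b ≤ (ascPochhammer ℝ m).eval c := by
  induction m with
  | zero => simp
  | succ m ih =>
    rw [ascP_succ, ascP_succ]
    have : (0 : ℝ) ≤ b + m := by positivity
    exact ⟨mul_nonneg ih.1 this,
      mul_le_mul ih.2 (by linarith) this (ih.1.trans ih.2)⟩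

lemma gs_le_geom (hb : 0 ≤ b) (hc : 0 < c) (hbc : b ≤ c) (hs0 : 0 ≤ s) (hs : s < 1) :
    gs b c s ≤ 1 / (1 - s) := by
  rw [one_div, ← tsum_geometric_of_lt_one hs0 hs]
  refine (summable_gs hc (abs_lt.2 ⟨by linarith, hs⟩)).tsum_le_tsum (fun m => ?_)
    (summable_geometric_of_lt_one hs0 hs)
  have h1 := ascPochhammer_pos m c hc
  have h2 : (ascPochhammer ℝ m).eval b / (ascPochhammer ℝ m).eval c ≤ 1 :=
    (div_le_one h1).2 (ascP_mono hb hbc m).2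
  exact mul_le_of_le_one_left (by positivity) h2

/-- One step of `gs_contig` as an upper bound: a bound `B` at `c + μ` and `1 / (1 - s) ≤ W`
give any bound `B'` allowed by `hB'` at `c + μ'`, where `μ' = μ + 1`. -/
lemma gs_step {μ μ' W B B' : ℝ} (hμ' : μ + 1 = μ') (hμ : 0 ≤ μ + 1) (hb : 0 < c + μ)
    (hc : 1 ≤ c) (hs0 : 0 ≤ s) (hs : s < 1) (hW : 1 / (1 - s) ≤ W)
    (hB : gs (c + μ) c s ≤ B)
    (hB' : W * ((μ + 1) * B + (c - 1)) ≤ (c + μ) * B') : gs (c + μ') c s ≤ B' := by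
  have h := gs_contig (b := c + μ) (by linarith : 0 < c) (abs_lt.2 ⟨by linarith, hs⟩)
  have h1 : 0 < 1 - s := by linarith
  have hG := one_le_gs hb.le (by linarith : 0 < c) hs0 hs
  rw [show c + μ + 1 = c + μ' by linarith] at h
  have h2 : (c + μ) * gs (c + μ') c s
      = 1 / (1 - s) * ((μ + 1) * gs (c + μ) c s + (c - 1)) := by
    field_simp
    linear_combination h
  have h3 : (μ + 1) * gs (c + μ) c s ≤ (μ + 1) * B := mul_le_mul_of_nonneg_left hB hμ
  have h4 : 0 ≤ (μ + 1) * gs (c + μ) c s := mul_nonneg hμ (by linarith)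
  refine le_of_mul_le_mul_left ?_ hb
  rw [h2]
  refine le_trans ?_ hB'
  exact mul_le_mul hW (by linarith) (by linarith) (le_trans (by positivity) hW)

lemma hasDerivAt_gs (hc : 0 < c) (hs0 : 0 < s) (hs : s < 1) :
    HasDerivAt (gs b c) (gsE b c s / s) s := by
  obtain ⟨r, h1, h2⟩ := exists_between hs
  have hr : 0 < r := hs0.trans h1
  set A : ℕ → ℝ := fun m => (ascPochhammer ℝ m).eval b / (ascPochhammer ℝ m).eval c with hA
  have hD := hasDerivAt_tsum_of_isPreconnected (𝕜 := ℝ)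
    (u := fun m : ℕ => |(m : ℝ) * (A m * r ^ m)| / r)
    (g := fun (m : ℕ) x => A m * x ^ m) (g' := fun (m : ℕ) x => A m * (m * x ^ (m - 1)))
    (t := Set.Ioo (-r) r) (y₀ := s) (y := s)
    ((summable_gs_mul (b := b) hc (abs_lt.2 ⟨by linarith, h2⟩)).abs.div_const r)
    isOpen_Ioo isPreconnected_Ioo
    (fun m x _ => (hasDerivAt_pow m x).const_mul (A m)) ?_
    ⟨by linarith, h1⟩ (summable_gs (b := b) hc (abs_lt.2 ⟨by linarith, hs⟩))
    ⟨by linarith, h1⟩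
  · have he : ∑' m : ℕ, A m * (m * s ^ (m - 1)) = gsE b c s / s := by
      unfold gsE
      rw [← tsum_div_const]
      refine tsum_congr fun m => ?_
      cases m with
      | zero => simp
      | succ m =>
        rw [Nat.add_sub_cancel, pow_succ]
        field_simp
        ring
    rw [← he]
    exact hD
  · intro m x hx
    have hx' : |x| ≤ r := (abs_lt.2 hx).le
    cases m with
    | zero => simp
    | succ m =>
      rw [le_div_iff₀ hr, Nat.add_sub_cancel, Real.norm_eq_abs]
      simp only [abs_mul, abs_pow, abs_of_pos hr]
      have h3 : |x| ^ m ≤ r ^ m := pow_le_pow_left₀ (abs_nonneg _) hx' m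
      have h4 : |A (m + 1)| * (|((m + 1 : ℕ) : ℝ)| * |x| ^ m)
          ≤ |A (m + 1)| * (|((m + 1 : ℕ) : ℝ)| * r ^ m) := by gcongr
      calc _ ≤ |A (m + 1)| * (|((m + 1 : ℕ) : ℝ)| * r ^ m) * r := by gcongr
        _ = _ := by ring

end coeff

/-! ### The zero of `₂F₁(c + ν, -1/2; c; ·)` -/

lemma ascP_neg_half (m : ℕ) : (ascPochhammer ℝ (m + 1)).eval (-1 / 2 : ℝ) < 0 := by
  induction m with
  | zero => norm_num
  | succ m ih =>
    rw [ascP_succ]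
    refine mul_neg_of_neg_of_pos ih ?_
    push_cast
    have : (0 : ℝ) ≤ m := m.cast_nonneg
    linarith

/-- Since `(c + ν)_m / (c)_m` is convex in `m` for `ν ≥ 1`, it lies above its chord
through `m = 0, 1`. -/
lemma ascP_lower {c ν : ℝ} (hc : 0 < c) (hν : 1 ≤ ν) (m : ℕ) :
    (1 + m * ν / c) * (ascPochhammer ℝ m).eval c ≤ (ascPochhammer ℝ m).eval (c + ν) := by
  induction m with
  | zero => simp
  | succ m ih =>
    rw [ascP_succ, ascP_succ]
    have hp := ascPochhammer_pos m c hc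
    have h1 : (0 : ℝ) ≤ c + ν + m := by positivity
    have h2 := mul_le_mul_of_nonneg_right ih h1
    refine le_trans ?_ h2
    have h3 : 0 ≤ (m * ν * (ν - 1) / c) * (ascPochhammer ℝ m).eval c := by
      have : 0 ≤ ν - 1 := by linarith
      positivity
    have h4 : (1 + m * ν / c) * (c + ν + m) - (1 + ((m + 1 : ℕ) : ℝ) * ν / c) * (c + m)
        = m * ν * (ν - 1) / c := by
      push_cast
      field_simp
      ring
    linear_combination h3 - (ascPochhammer ℝ m).eval c * h4

lemma ascP_lower_two {c ν : ℝ} (hc : 0 < c) (hν : 1 < ν) :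
    (1 + (2 : ℕ) * ν / c) * (ascPochhammer ℝ 2).eval c < (ascPochhammer ℝ 2).eval (c + ν) := by
  have h : ∀ x : ℝ, (ascPochhammer ℝ 2).eval x = x * (x + 1) := by
    intro x
    rw [ascP_succ]
    simp
  rw [h, h]
  have h1 : (c + ν) * (c + ν + 1) - (1 + (2 : ℕ) * ν / c) * (c * (c + 1)) = ν * (ν - 1) := by
    push_cast
    field_simp
    ring
  have : 0 < ν * (ν - 1) := mul_pos (by linarith) (by linarith)
  linarith

/-- Any zero `s` of `₂F₁(c + ν, -1/2; c; ·)` satisfies `s < 2c / (2c + ν)`: replacing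
`(c + ν)_m / (c)_m` by its chord turns the series into
`√(1 - s) (1 - ν s / (2 c (1 - s)))`, here with `√(1 - s)` written as `gs (-1/2) 1 s`. -/
lemma zero_bound {c ν s : ℝ} (hc : 0 < c) (hν : 1 < ν) (hs0 : 0 < s) (hs : s < 1)
    (hz : hyp2F1 (c + ν) (-1 / 2) c s = 0) : s * (2 * c + ν) < 2 * c := by
  have hs' : |s| < 1 := abs_lt.2 ⟨by linarith, hs⟩
  set e : ℕ → ℝ := fun m =>
    (ascPochhammer ℝ m).eval (-1 / 2 : ℝ) / (ascPochhammer ℝ m).eval 1 * s ^ m with he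
  set P : ℕ → ℝ := fun m =>
    (ascPochhammer ℝ m).eval (c + ν) / (ascPochhammer ℝ m).eval c with hP
  have hF : ∑' m, P m * e m = 0 := by
    rw [← hz]
    unfold hyp2F1
    refine tsum_congr fun m => ?_
    simp only [hP, he, ascPochhammer_eval_one]
    rw [← mul_assoc, div_mul_div_comm]
  have hsumF : Summable fun m => P m * e m := by
    refine summable_of_ratio
      (ρ := fun m : ℕ => (c + ν + m) / (c + m) * ((-1 / 2 + m) / (1 + m) * s)) hs'
      (fun m => ?_) ?_
    · have h1 : e (m + 1) = (-1 / 2 + m) / (1 + m) * s * e m := gterm_succ one_pos m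
      have h2 : P (m + 1) = (c + ν + m) / (c + m) * P m := by
        simpa using gterm_succ (b := c + ν) (s := 1) hc m
      rw [h1, h2]
      ring
    · simpa using (tendsto_ratio (c + ν) c).mul ((tendsto_ratio (-1 / 2) 1).mul_const s)
  have hE : Summable e := summable_gs one_pos hs'
  have hM : Summable fun m : ℕ => (m : ℝ) * e m := summable_gs_mul one_pos hs'
  have hchord : ∑' m : ℕ, (1 + m * ν / c) * e m
      = gs (-1 / 2) 1 s + ν / c * gsE (-1 / 2) 1 s := by
    change _ = ∑' m, e m + ν / c * ∑' m : ℕ, (m : ℝ) * e m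
    rw [← tsum_mul_left, ← hE.tsum_add (hM.mul_left _)]
    exact tsum_congr fun m => by ring
  have hsumC : Summable fun m : ℕ => (1 + m * ν / c) * e m :=
    (hE.add (hM.mul_left (ν / c))).congr fun m => by ring
  have hneg : ∀ m, e (m + 1) < 0 := fun m =>
    mul_neg_of_neg_of_pos (div_neg_of_neg_of_pos (ascP_neg_half m)
      (ascPochhammer_pos _ 1 one_pos)) (by positivity)
  have hPl : ∀ m : ℕ, 1 + m * ν / c ≤ P m := fun m =>
    (le_div_iff₀ (ascPochhammer_pos m c hc)).2 (ascP_lower hc hν.le m)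
  have hP2 : 1 + (2 : ℕ) * ν / c < P 2 :=
    (lt_div_iff₀ (ascPochhammer_pos 2 c hc)).2 (ascP_lower_two hc hν)
  have hlt : ∑' m, P m * e m < ∑' m : ℕ, (1 + m * ν / c) * e m := by
    refine hsumF.tsum_lt_tsum (i := 2) (fun m => ?_) ?_ hsumC
    · cases m with
      | zero => simp [hP]
      | succ m => exact mul_le_mul_of_nonpos_right (hPl _) (hneg m).le
    · exact mul_lt_mul_of_neg_right hP2 (hneg 1)
  rw [hF, hchord] at hlt
  have hode := gsE_eq (b := -1 / 2) one_pos hs'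
  have hct := gs_contig (b := -1 / 2) one_pos hs'
  have hH := one_le_gs (b := -1 / 2 + 1) (by norm_num) one_pos hs0.le hs
  have h1s : 0 < 1 - s := by linarith
  have hEpos : 0 < gs (-1 / 2) 1 s := by
    have : gs (-1 / 2) 1 s = (1 - s) * gs (-1 / 2 + 1) 1 s := by linear_combination 2 * hct
    rw [this]
    exact mul_pos h1s (by linarith)
  have hmul : 0 < gs (-1 / 2) 1 s * (2 * c * (1 - s) - ν * s) := by
    have h3 := mul_pos (mul_pos hc h1s) hlt
    have h4 : c * (1 - s) * (gs (-1 / 2) 1 s + ν / c * gsE (-1 / 2) 1 s)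
        = c * (1 - s) * gs (-1 / 2) 1 s + ν * ((1 - s) * gsE (-1 / 2) 1 s) := by
      field_simp
    rw [h4, hode] at h3
    linear_combination 2 * h3
  have := pos_of_mul_pos_right hmul hEpos.le
  linarith

/-! ### The inequality `(1 - 2s) G(s) + (k - 2) > 0` -/

/-- With `κ = k`, `ν = (d - 1) / 2` and `s` below the bound of `zero_bound`, an upper bound `B`
for `G` satisfying one polynomial inequality suffices. -/
lemma finish {κ ν s G B : ℝ} (hκ : ν < κ) (hν : 0 < ν) (hs : s * (κ + ν) < κ) (hG : 1 ≤ G)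
    (hB : G ≤ B) (h : (κ - ν) * B ≤ (κ - 2) * (κ + ν)) : (2 * s - 1) * G < κ - 2 := by
  have h1 : (2 * s - 1) * (κ + ν) < κ - ν := by linarith
  have h2 := mul_lt_mul_of_pos_right h1 (by linarith : 0 < G)
  have h3 := mul_le_mul_of_nonneg_left hB (by linarith : 0 ≤ κ - ν)
  have h4 : (2 * s - 1) * G * (κ + ν) < (κ - 2) * (κ + ν) := by linarith
  exact lt_of_mul_lt_mul_right h4 (by linarith)

/-- The case `k ≥ 3`, `s > 1/2`. Starting from `G ≤ 1 / (1 - s) ≤ κ / ν + 1` at `c` or `c - 1/2`,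
`gs_step` gives bounds linear in `κ` up to the parameter `c + (d - 4) / 2`; their slopes
come from `β ↦ (2 (μ + 1) β + 1) / ν`, possibly rounded up, and their constant terms are chosen so
that each step holds on all of `κ ≥ max 3 ν`. -/
lemma key_large {d : ℕ} (hd : 4 ≤ d) (hd' : d ≤ 11) {κ s : ℝ} (hκ : 3 ≤ κ)
    (hs0 : 1 / 2 < s) (hs1 : s < 1) (hs : s * (κ + ((d : ℝ) - 1) / 2) < κ) :
    (2 * s - 1) * gs (κ / 2 + ((d : ℝ) - 4) / 2) (κ / 2) s < κ - 2 := by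
  have hd4 : (4 : ℝ) ≤ d := by exact_mod_cast hd
  have hc : 1 ≤ κ / 2 := by linarith
  have hsn : 0 ≤ s := by linarith
  have hνκ : ((d : ℝ) - 1) / 2 < κ := by nlinarith
  have hν : 0 < ((d : ℝ) - 1) / 2 := by linarith
  have h1s : 0 < 1 - s := by linarith
  have hW : 1 / (1 - s) ≤ κ / (((d : ℝ) - 1) / 2) + 1 := by
    rw [div_le_iff₀ h1s, div_add_one hν.ne', div_mul_eq_mul_div, le_div_iff₀ hν]
    linarith
  have hG := one_le_gs (b := κ / 2 + ((d : ℝ) - 4) / 2) (c := κ / 2) (by linarith)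
    (by linarith) hsn hs1
  have base0 : gs (κ / 2 + 0) (κ / 2) s ≤ κ / (((d : ℝ) - 1) / 2) + 1 :=
    (gs_le_geom (by linarith) (by linarith) (by linarith) hsn hs1).trans hW
  have base1 : gs (κ / 2 + (-1 / 2)) (κ / 2) s ≤ κ / (((d : ℝ) - 1) / 2) + 1 :=
    (gs_le_geom (by linarith) (by linarith) (by linarith) hsn hs1).trans hW
  have hstep : ∀ {μ μ' B B' : ℝ}, μ + 1 = μ' → 0 ≤ μ + 1 → 0 < κ / 2 + μ →
      gs (κ / 2 + μ) (κ / 2) s ≤ B →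
      (κ / (((d : ℝ) - 1) / 2) + 1) * ((μ + 1) * B + (κ / 2 - 1)) ≤ (κ / 2 + μ) * B' →
      gs (κ / 2 + μ') (κ / 2) s ≤ B' :=
    fun h1 h2 h3 h4 h5 => gs_step h1 h2 h3 hc hsn hs1 hW h4 h5
  interval_cases d
  · refine finish hνκ hν hs hG (B := κ / (((4 : ℕ) : ℝ) - 1) * 2 + 1) ?_ ?_
    · convert base0 using 2 <;> norm_num; ring
    · push_cast at hνκ ⊢
      nlinarith
  · have h1 : gs (κ / 2 + 1 / 2) (κ / 2) s ≤ 3/4 * κ + 17/8 :=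
      hstep (μ := -1 / 2) (by norm_num) (by norm_num) (by linarith) base1 (by push_cast; nlinarith)
    refine finish hνκ hν hs hG (B := 3/4 * κ + 17/8) ?_ ?_
    · convert h1 using 2
      norm_num
    · push_cast at hνκ ⊢
      nlinarith
  · have h1 : gs (κ / 2 + 1) (κ / 2) s ≤ 18/25 * κ + 9/5 :=
      hstep (μ := 0) (by norm_num) (by norm_num) (by linarith) base0 (by push_cast; nlinarith)
    refine finish hνκ hν hs hG (B := 18/25 * κ + 9/5) ?_ ?_
    · convert h1 using 2
      norm_num
    · push_cast at hνκ ⊢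
      nlinarith
  · have h1 : gs (κ / 2 + 1 / 2) (κ / 2) s ≤ 4/9 * κ + 5/3 :=
      hstep (μ := -1 / 2) (by norm_num) (by norm_num) (by linarith) base1 (by push_cast; nlinarith)
    have h2 : gs (κ / 2 + 3/2) (κ / 2) s ≤ 7/9 * κ + 8/3 :=
      hstep (μ := 1/2) (by norm_num) (by norm_num) (by linarith) h1 (by push_cast; nlinarith)
    refine finish hνκ hν hs hG (B := 7/9 * κ + 8/3) ?_ ?_
    · convert h2 using 2
      norm_num
    · push_cast at hνκ ⊢
      nlinarith
  · have h1 : gs (κ / 2 + 1) (κ / 2) s ≤ 9/20 * κ + 8/5 :=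
      hstep (μ := 0) (by norm_num) (by norm_num) (by linarith) base0 (by push_cast; nlinarith)
    have h2 : gs (κ / 2 + 2) (κ / 2) s ≤ 4/5 * κ + 5/2 :=
      hstep (μ := 1) (by norm_num) (by norm_num) (by linarith) h1 (by push_cast; nlinarith)
    refine finish hνκ hν hs hG (B := 4/5 * κ + 5/2) ?_ ?_
    · convert h2 using 2
      norm_num
    · push_cast at hνκ ⊢
      nlinarith
  · have h1 : gs (κ / 2 + 1 / 2) (κ / 2) s ≤ 5/16 * κ + 17/12 :=
      hstep (μ := -1 / 2) (by norm_num) (by norm_num) (by linarith) base1 (by push_cast; nlinarith)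
    have h2 : gs (κ / 2 + 3/2) (κ / 2) s ≤ 31/64 * κ + 33/16 :=
      hstep (μ := 1/2) (by norm_num) (by norm_num) (by linarith) h1 (by push_cast; nlinarith)
    have h3 : gs (κ / 2 + 5/2) (κ / 2) s ≤ 7/8 * κ + 3 :=
      hstep (μ := 3/2) (by norm_num) (by norm_num) (by linarith) h2 (by push_cast; nlinarith)
    refine finish hνκ hν hs hG (B := 7/8 * κ + 3) ?_ ?_
    · convert h3 using 2
      norm_num
    · push_cast at hνκ ⊢
      nlinarith
  · have h1 : gs (κ / 2 + 1) (κ / 2) s ≤ 1/3 * κ + 3/2 :=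
      hstep (μ := 0) (by norm_num) (by norm_num) (by linarith) base0 (by push_cast; nlinarith)
    have h2 : gs (κ / 2 + 2) (κ / 2) s ≤ 13/25 * κ + 11/5 :=
      hstep (μ := 1) (by norm_num) (by norm_num) (by linarith) h1 (by push_cast; nlinarith)
    have h3 : gs (κ / 2 + 3) (κ / 2) s ≤ 23/25 * κ + 3 :=
      hstep (μ := 2) (by norm_num) (by norm_num) (by linarith) h2 (by push_cast; nlinarith)
    refine finish hνκ hν hs hG (B := 23/25 * κ + 3) ?_ ?_
    · convert h3 using 2
      norm_num
    · push_cast at hνκ ⊢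
      nlinarith
  · have h1 : gs (κ / 2 + 1 / 2) (κ / 2) s ≤ 6/25 * κ + 13/10 :=
      hstep (μ := -1 / 2) (by norm_num) (by norm_num) (by linarith) base1 (by push_cast; nlinarith)
    have h2 : gs (κ / 2 + 3/2) (κ / 2) s ≤ 43/125 * κ + 89/50 :=
      hstep (μ := 1/2) (by norm_num) (by norm_num) (by linarith) h1 (by push_cast; nlinarith)
    have h3 : gs (κ / 2 + 5/2) (κ / 2) s ≤ 68/125 * κ + 5/2 :=
      hstep (μ := 3/2) (by norm_num) (by norm_num) (by linarith) h2 (by push_cast; nlinarith)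
    have h4 : gs (κ / 2 + 7/2) (κ / 2) s ≤ 97/100 * κ + 31/10 :=
      hstep (μ := 5/2) (by norm_num) (by norm_num) (by linarith) h3 (by push_cast; nlinarith)
    refine finish hνκ hν hs hG (B := 97/100 * κ + 31/10) ?_ ?_
    · convert h4 using 2
      norm_num
    · push_cast at hνκ ⊢
      nlinarith

/-- The claim after eliminating `G'`, for every `s` below the bound of `zero_bound`
(with `n = k + d`). -/
lemma key {d k : ℕ} (hk : 1 ≤ k) (hn : 7 ≤ k + d) (hd : 4 ≤ d) (hd' : d ≤ 11) {s : ℝ}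
    (hs0 : 0 < s) (hs1 : s < 1) (hs : s * ((k : ℝ) + ((d : ℝ) - 1) / 2) < k) :
    0 < (1 - 2 * s) * gs ((k : ℝ) / 2 + ((d : ℝ) - 4) / 2) ((k : ℝ) / 2) s + (k - 2) := by
  have hk' : (1 : ℝ) ≤ k := by exact_mod_cast hk
  have hd4 : (4 : ℝ) ≤ d := by exact_mod_cast hd
  have hn' : (7 : ℝ) ≤ k + d := by exact_mod_cast hn
  have hG := one_le_gs (b := (k : ℝ) / 2 + ((d : ℝ) - 4) / 2) (c := (k : ℝ) / 2) (by linarith)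
    (by linarith) hs0.le hs1
  obtain h3 | h12 := le_or_gt 3 k
  · have h3' : (3 : ℝ) ≤ k := by exact_mod_cast h3
    obtain hs2 | hs2 := le_or_gt s (1 / 2)
    · have := mul_nonneg (by linarith : 0 ≤ 1 - 2 * s) (zero_le_one.trans hG)
      linarith
    · have := key_large hd hd' h3' hs2 hs1 hs
      linarith
  have hsa : |s| < 1 := abs_lt.2 ⟨by linarith, hs1⟩
  interval_cases k
  · -- for `k = 1` the bound on `s` reads `s < 2 / n`; the claim is `(1 - 2s) G > 1`
    norm_num at hs hn' hG ⊢
    obtain rfl | hd7 : d = 6 ∨ 7 ≤ d := by omega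
    · -- here `G = (1 + s) / (1 - s)²`
      have h1 := gs_contig (b := -1 / 2) (c := 1 / 2) (by norm_num) hsa
      have h2 := gs_contig (b := 1 / 2) (c := 1 / 2) (by norm_num) hsa
      norm_num at h1 h2 hs ⊢
      have h1s : 0 < 1 - s := by linarith
      have h4 : (1 - s) ^ 2 * gs (3 / 2) (1 / 2) s = 1 + s := by
        linear_combination 2 * (1 - s) * h2 + 4 * h1
      have h5 : 0 < (1 - s) ^ 2 * ((1 - 2 * s) * gs (3 / 2) (1 / 2) s - 1) := by
        have : (1 - s) ^ 2 * ((1 - 2 * s) * gs (3 / 2) (1 / 2) s - 1)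
            = s * (1 - 3 * s) := by linear_combination (1 - 2 * s) * h4
        rw [this]
        exact mul_pos hs0 (by linarith)
      have := pos_of_mul_pos_right h5 (by positivity)
      linarith
    · -- here the first two terms of the series are enough
      have hd7' : (7 : ℝ) ≤ d := by exact_mod_cast hd7
      have hsum := (summable_gs (b := 1 / 2 + ((d : ℝ) - 4) / 2) (c := 1 / 2) (by norm_num)
        hsa).sum_le_tsum (Finset.range 2)
        (fun m _ => gterm_nonneg (by linarith) (by norm_num) hs0.le m)
      change _ ≤ gs _ _ _ at hsum
      simp only [Finset.sum_range_succ, Finset.sum_range_zero, ascPochhammer_zero,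
        ascPochhammer_one, Polynomial.eval_one, Polynomial.eval_X, pow_zero, pow_one] at hsum
      have hs2 : s < 1 / 4 := by nlinarith
      have h5 := mul_le_mul_of_nonneg_left hsum (by linarith : 0 ≤ 1 - 2 * s)
      refine lt_of_lt_of_le ?_ h5
      have h6 : 0 < s * ((d - 5) - 2 * ((d : ℝ) - 3) * s) := by
        refine mul_pos hs0 ?_
        nlinarith
      linear_combination h6
  · have hs2 : s < 1 / 2 := by
      push_cast at hs hn'
      nlinarith
    have := mul_pos (by linarith : 0 < 1 - 2 * s) (zero_lt_one.trans_le hG)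
    push_cast at this ⊢
    linarith

/-! ### The theorem -/

/-- For `n ≥ 7` and `n-11 ≤ k ≤ n-4`, the exponent `4-n` is
admissible: with `t₀` the unique zero of `f_{n,k}` in `(0,1)` and
`g̃(t) = ₂F₁(1,(n-4)/2;k/2;t²)`, one has
`g̃'(t₀)/g̃(t₀) > ((n-2)t₀ - (k-1)t₀⁻¹)/(1-t₀²)`. -/
theorem four_sub_n_admissible_near_top_k
    (n k : ℕ) (hn : 7 ≤ n) (hk1 : n ≤ k + 11) (hk2 : k + 4 ≤ n)
    (t₀ : ℝ) (ht₀ : t₀ ∈ Set.Ioo (0 : ℝ) 1) (hzero : fnk n k t₀ = 0)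
    (huniq : ∀ t ∈ Set.Ioo (0 : ℝ) 1, fnk n k t = 0 → t = t₀) :
    deriv (gtil n k) t₀ / gtil n k t₀
      > (((n : ℝ) - 2) * t₀ - ((k : ℝ) - 1) * t₀⁻¹) / (1 - t₀ ^ 2) := by
  obtain ⟨ht0, ht1⟩ := ht₀
  obtain ⟨d, rfl⟩ := Nat.exists_eq_add_of_le (by omega : k ≤ n)
  have hs0 : 0 < t₀ ^ 2 := by positivity
  have hs1 : t₀ ^ 2 < 1 := by nlinarith
  have hk : 1 ≤ k := by
    -- for `k = 0` every term of the series after the first is `_ / 0 = 0`, so `f = 1`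
    by_contra h0
    obtain rfl : k = 0 := by omega
    have : fnk (0 + d) 0 t₀ = 1 := by
      unfold fnk hyp2F1
      rw [tsum_eq_single 0]
      · simp
      · intro m hm
        obtain ⟨m, rfl⟩ := Nat.exists_eq_succ_of_ne_zero hm
        simp
    rw [this] at hzero
    exact one_ne_zero hzero
  have hk' : (1 : ℝ) ≤ k := by exact_mod_cast hk
  have hd4 : (4 : ℝ) ≤ d := by exact_mod_cast (by omega : 4 ≤ d)
  have hz : t₀ ^ 2 * ((k : ℝ) + ((d : ℝ) - 1) / 2) < k := by
    have := zero_bound (c := (k : ℝ) / 2) (ν := ((d : ℝ) - 1) / 2) (by linarith) (by linarith)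
      hs0 hs1 (by
        rw [← hzero]
        unfold fnk
        congr 1
        push_cast
        ring)
    linear_combination this
  have hkey := key hk (by omega) (by omega) (by omega) hs0 hs1 hz
  set b : ℝ := (k : ℝ) / 2 + ((d : ℝ) - 4) / 2 with hb
  set c : ℝ := (k : ℝ) / 2 with hc
  have hcpos : 0 < c := by linarith
  have hgt : gtil (k + d) k = fun t => gs b c (t ^ 2) := by
    funext t
    rw [gtil, hyp2F1_one]
    congr 1
    push_cast
    ring
  have hder : deriv (gtil (k + d) k) t₀ = gsE b c (t₀ ^ 2) / t₀ ^ 2 * (2 * t₀) := by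
    rw [hgt]
    have h2 : HasDerivAt (fun t : ℝ => t ^ 2) (2 * t₀) t₀ := by simpa using hasDerivAt_pow 2 t₀
    exact (HasDerivAt.comp (h := fun t : ℝ => t ^ 2) t₀
      (hasDerivAt_gs (b := b) hcpos hs0 hs1) h2).deriv
  have hG := one_le_gs (b := b) (c := c) (by linarith) hcpos hs0.le hs1
  have hode := gsE_eq (b := b) hcpos (abs_lt.2 ⟨by linarith, hs1⟩)
  have hg : gtil (k + d) k t₀ = gs b c (t₀ ^ 2) := by rw [hgt]
  rw [hder, hg]
  have h1s : 0 < 1 - t₀ ^ 2 := by linarith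
  have hGpos : 0 < gs b c (t₀ ^ 2) := by linarith
  have hE : gsE b c (t₀ ^ 2)
      = ((b * t₀ ^ 2 - (c - 1)) * gs b c (t₀ ^ 2) + (c - 1)) / (1 - t₀ ^ 2) := by
    rw [eq_div_iff h1s.ne', mul_comm, hode]
  rw [gt_iff_lt, ← sub_pos]
  have hdiff : gsE b c (t₀ ^ 2) / t₀ ^ 2 * (2 * t₀) / gs b c (t₀ ^ 2)
      - ((((k + d : ℕ) : ℝ) - 2) * t₀ - ((k : ℝ) - 1) * t₀⁻¹) / (1 - t₀ ^ 2)
      = ((1 - 2 * t₀ ^ 2) * gs b c (t₀ ^ 2) + (k - 2))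
        / (t₀ * (1 - t₀ ^ 2) * gs b c (t₀ ^ 2)) := by
    rw [hE]
    generalize gs b c (t₀ ^ 2) = G at hGpos ⊢
    rw [hb, hc]
    have h1s' := h1s.ne'
    have hG' := hGpos.ne'
    push_cast
    field_simp
    ring
  rw [hdiff]
  exact div_pos hkey (by positivity)
end
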